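/- arXiv:2105.03805 — 2 statements merged into one kernel-verified Lean document; each statement's English description precedes it below -/
import Mathlib

section
/- Let λ ≥ 0, μ₁ ∈ ℝ and let n be an integer with 2 ≤ n ≤ 4. Then there exists a unique function h ∈ C²((0,∞)) ∩ C¹([0,∞)) satisfying 2r²h(r)h''(r) = (n-1)h(r)(h(r)-1) + r h'(r)(r h'(r) - λr - (n-1)) with h(r) > 0 for all r > 0, together with the initial conditions h(0) = 1 and h'(0) = μ₁. -/
open Set Filter Topology

/-- `h` is a solution of the initial value problem
`2r²h h'' = (n-1)h(h-1) + r h'(r h' - λr - (n-1))`, `h > 0` on `(0,∞)`,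
with `h ∈ C²((0,∞)) ∩ C¹([0,∞))`, `h(0) = 1` and `h'(0) = μ₁`. -/
def IsSol (n : ℕ) (lam μ₁ : ℝ) (h : ℝ → ℝ) : Prop :=
  ContDiffOn ℝ 2 h (Set.Ioi 0) ∧ ContDiffOn ℝ 1 h (Set.Ici 0) ∧
  (∀ r : ℝ, 0 < r →
    2 * r ^ 2 * h r * deriv (deriv h) r =
      ((n : ℝ) - 1) * h r * (h r - 1) +
        r * deriv h r * (r * deriv h r - lam * r - ((n : ℝ) - 1)) ∧ 0 < h r) ∧
  h 0 = 1 ∧ derivWithin h (Set.Ici 0) 0 = μ₁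

/-!
Write `n - 1 = 2 a`. In terms of `S = h' + a (h - 1) / r` and `f = (h - 1) / r` the singular
equation becomes the regular one `S' = (S - a f) (S + a f - λ) / (2 h)`, where `f` and
`h = 1 + r f` are recovered from `S` by the bounded averaging operator `f(r) = ∫₀¹ τᵃ S(rτ) dτ`.
As long as `h` stays positive this is a differential equation whose right-hand side depends in a
Lipschitz way on the past of `S`, so it is uniquely solvable, and solutions continue while
`(S, f, h)` stays bounded and `h` stays away from `0`.

Neither can fail in finite time. The slope `h'` keeps the sign of `μ₁`, because `h'' = a f / r` at
its first zero. If `μ₁ > 0`, then `S / h` decreases and `h` grows at most exponentially. If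
`μ₁ < 0`, then `S` increases and stays negative, and the barrier `S + (a / R) (log h - h)` increases
on `[0, R]`, which keeps `log h` bounded below. If `μ₁ = 0`, then `S = 0`.
-/

/-! ### Weighted radial means -/

/-- The weighted mean `∫₀¹ τᵃ u(rτ) dτ`: for `r > 0` it equals `r^(-a-1) ∫₀ʳ sᵃ u(s) ds`, and it is
the solution regular at `0` of the singular equation `r f' + (a + 1) f = u`. -/
noncomputable def radialMean (a : ℝ) (u : ℝ → ℝ) (r : ℝ) : ℝ :=
  ∫ τ in (0 : ℝ)..1, τ ^ a * u (r * τ)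

section RadialMean

variable {a c r δ : ℝ} {u v : ℝ → ℝ}

lemma continuous_radialMean (ha : 0 ≤ a) (hu : Continuous u) : Continuous (radialMean a u) := by
  refine intervalIntegral.continuous_parametric_intervalIntegral_of_continuous'
    (f := fun r τ : ℝ => τ ^ a * u (r * τ)) ?_ 0 1
  exact ((Real.continuous_rpow_const ha).comp continuous_snd).mul (hu.comp (by fun_prop))

lemma radialMean_congr (hr : 0 ≤ r) (h : EqOn u v (Icc 0 r)) :
    radialMean a u r = radialMean a v r := by
  refine intervalIntegral.integral_congr fun τ hτ => ?_
  rw [uIcc_of_le zero_le_one] at hτ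
  simp only [h ⟨mul_nonneg hr hτ.1, mul_le_of_le_one_right hr hτ.2⟩]

lemma abs_radialMean_sub_le (ha : 0 ≤ a) (hu : Continuous u) (hv : Continuous v) (hr : 0 ≤ r)
    (h : ∀ s ∈ Icc 0 r, |u s - v s| ≤ δ) : |radialMean a u r - radialMean a v r| ≤ δ := by
  have hint {w : ℝ → ℝ} (hw : Continuous w) :
      IntervalIntegrable (fun τ => τ ^ a * w (r * τ)) MeasureTheory.volume 0 1 :=
    ((Real.continuous_rpow_const ha).mul (hw.comp (continuous_const_mul r))).intervalIntegrable _ _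
  rw [radialMean, radialMean, ← intervalIntegral.integral_sub (hint hu) (hint hv)]
  suffices hbound : ∀ τ ∈ uIoc (0 : ℝ) 1, ‖τ ^ a * u (r * τ) - τ ^ a * v (r * τ)‖ ≤ δ by
    simpa only [sub_zero, abs_one, mul_one, Real.norm_eq_abs] using
      intervalIntegral.norm_integral_le_of_norm_le_const hbound
  intro τ hτ
  rw [uIoc_of_le zero_le_one] at hτ
  rw [← mul_sub, norm_mul, Real.norm_of_nonneg (Real.rpow_nonneg hτ.1.le a)]
  exact (mul_le_of_le_one_left (norm_nonneg _) (Real.rpow_le_one hτ.1.le hτ.2 ha)).trans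
    (h _ ⟨mul_nonneg hr hτ.1.le, mul_le_of_le_one_right hr hτ.2⟩)

lemma radialMean_apply_zero (ha : 0 ≤ a) : radialMean a u 0 = u 0 / (a + 1) := by
  have hpow : ∫ τ in (0 : ℝ)..1, τ ^ a = 1 / (a + 1) := by
    rw [integral_rpow (Or.inl (by linarith)), Real.one_rpow, Real.zero_rpow (by linarith), sub_zero]
  simp only [radialMean, zero_mul, intervalIntegral.integral_mul_const, hpow]
  ring

lemma rpow_mul_radialMean (hr : 0 < r) :
    r ^ (a + 1) * radialMean a u r = ∫ s in (0 : ℝ)..r, s ^ a * u s := by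
  have hsubst := intervalIntegral.mul_integral_comp_mul_left (a := 0) (b := 1)
    (f := fun s => s ^ a * u s) (c := r)
  rw [mul_zero, mul_one] at hsubst
  rw [← hsubst, Real.rpow_add_one hr.ne', mul_comm (r ^ a) r, mul_assoc, radialMean,
    ← intervalIntegral.integral_const_mul]
  congr 1
  refine intervalIntegral.integral_congr fun τ hτ => ?_
  rw [uIcc_of_le zero_le_one] at hτ
  simp only [Real.mul_rpow hr.le hτ.1, mul_assoc]

lemma mul_radialMean_zero (hr : 0 < r) : r * radialMean 0 u r = ∫ s in (0 : ℝ)..r, u s := by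
  simpa only [zero_add, Real.rpow_one, Real.rpow_zero, one_mul] using
    rpow_mul_radialMean (a := 0) (u := u) hr

lemma hasDerivAt_radialMean (ha : 0 ≤ a) (hu : Continuous u) (hr : 0 < r) :
    HasDerivAt (radialMean a u) ((u r - (a + 1) * radialMean a u r) / r) r := by
  have hcont : Continuous fun s : ℝ => s ^ a * u s := (Real.continuous_rpow_const ha).mul hu
  have hprimitive : HasDerivAt (fun x => ∫ s in (0 : ℝ)..x, s ^ a * u s) (r ^ a * u r) r :=
    hcont.integral_hasStrictDerivAt 0 r |>.hasDerivAt
  have hpow : HasDerivAt (fun x : ℝ => x ^ (a + 1)) ((a + 1) * r ^ a) r := by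
    simpa only [add_sub_cancel_right] using
      Real.hasDerivAt_rpow_const (x := r) (p := a + 1) (Or.inl hr.ne')
  have hquot : radialMean a u =ᶠ[𝓝 r]
      fun x => (∫ s in (0 : ℝ)..x, s ^ a * u s) / x ^ (a + 1) := by
    filter_upwards [Ioi_mem_nhds hr] with x hx
    rw [← rpow_mul_radialMean hx, mul_div_cancel_left₀ _ (Real.rpow_pos_of_pos hx _).ne']
  refine ((hprimitive.div hpow (Real.rpow_pos_of_pos hr _).ne').congr_of_eventuallyEq
    hquot).congr_deriv ?_
  have hra : r ^ a ≠ 0 := (Real.rpow_pos_of_pos hr a).ne'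
  rw [← rpow_mul_radialMean hr, Real.rpow_add_one hr.ne']
  field_simp

lemma eq_add_mul_radialMean_zero_of_hasDerivAt {g : ℝ → ℝ} (hu : Continuous u)
    (hg : ContinuousOn g (Ici 0)) (hg' : ∀ s, 0 < s → HasDerivAt g (u s) s) (hr : 0 ≤ r) :
    g r = g 0 + r * radialMean 0 u r := by
  rcases hr.eq_or_lt with rfl | hr
  · rw [zero_mul, add_zero]
  · have hftc := intervalIntegral.integral_eq_sub_of_hasDerivAt_of_le hr.le
      (hg.mono Icc_subset_Ici_self) (fun s hs => hg' s hs.1) (hu.intervalIntegrable 0 r)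
    rw [mul_radialMean_zero hr, hftc, add_sub_cancel]

/-- Both sides solve `r f' + (a + 1) f = u + (a - c) M` with `M = radialMean c u`. -/
lemma radialMean_add_mul_radialMean (ha : 0 ≤ a) (hc : 0 ≤ c) (hu : Continuous u) (hr : 0 ≤ r) :
    radialMean a (fun s => u s + (a - c) * radialMean c u s) r = radialMean c u r := by
  rcases hr.eq_or_lt with rfl | hr
  · simp only [radialMean_apply_zero ha, radialMean_apply_zero hc]
    field_simp
    ring
  have hM := continuous_radialMean hc hu
  have hderiv : ∀ s ∈ Ioo 0 r, HasDerivAt (fun s => s ^ (a + 1) * radialMean c u s)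
      (s ^ a * (u s + (a - c) * radialMean c u s)) s := fun s hs => by
    have hs0 := hs.1.ne'
    refine ((Real.hasDerivAt_rpow_const (Or.inl hs0)).mul
      (hasDerivAt_radialMean hc hu hs.1)).congr_deriv ?_
    rw [add_sub_cancel_right, Real.rpow_add_one hs0]
    field_simp
    ring
  have hcont : Continuous fun s => s ^ (a + 1) * radialMean c u s :=
    (Real.continuous_rpow_const (by linarith)).mul hM
  have hftc := intervalIntegral.integral_eq_sub_of_hasDerivAt_of_le hr.le hcont.continuousOn hderiv
    (((Real.continuous_rpow_const ha).mul
      (hu.add (continuous_const.mul hM))).intervalIntegrable 0 r)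
  rw [← rpow_mul_radialMean hr, Real.zero_rpow (by linarith), zero_mul, sub_zero] at hftc
  exact mul_left_cancel₀ (Real.rpow_pos_of_pos hr _).ne' hftc

end RadialMean

/-! ### Causal differential equations -/

/-- Banach's fixed point theorem on `C([0, R], E)`, applied to `u ↦ e^(-M r) u`. -/
lemma exists_eqOn_of_exp_weighted_contraction {E : Type*} [NormedAddCommGroup E] [NormedSpace ℝ E]
    [CompleteSpace E] {T : (ℝ → E) → ℝ → E} {K : NNReal} {M R : ℝ} (hR : 0 ≤ R) (hK : K < 1)
    (hT : ∀ u, Continuous u → Continuous (T u))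
    (hcontr : ∀ u v, Continuous u → Continuous v → ∀ D, 0 ≤ D →
      (∀ s ∈ Icc 0 R, ‖u s - v s‖ ≤ D * Real.exp (M * s)) →
      ∀ r ∈ Icc 0 R, ‖T u r - T v r‖ ≤ K * (D * Real.exp (M * r))) :
    ∃ u, Continuous u ∧ EqOn u (T u) (Icc 0 R) := by
  let path (κ : C(Icc 0 R, E)) (s : ℝ) : E := Real.exp (M * s) • IccExtend hR κ s
  have hpath (κ) : Continuous (path κ) :=
    (Real.continuous_exp.comp (continuous_const_mul M)).smul (κ.continuous.Icc_extend' (h := hR))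
  have hpath_sub (κ κ' : C(Icc 0 R, E)) (s : ℝ) :
      ‖path κ s - path κ' s‖ ≤ dist κ κ' * Real.exp (M * s) := by
    rw [← smul_sub, norm_smul, Real.norm_of_nonneg (Real.exp_pos _).le, mul_comm, ← dist_eq_norm]
    gcongr
    exact ContinuousMap.dist_apply_le_dist _
  let weightedT (κ : C(Icc 0 R, E)) : C(Icc 0 R, E) :=
    ⟨fun r => Real.exp (-(M * r)) • T (path κ) r,
      (by fun_prop : Continuous fun r : Icc 0 R => Real.exp (-(M * r))).smul
        ((hT _ (hpath κ)).comp continuous_subtype_val)⟩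
  have hlip : LipschitzWith K weightedT := LipschitzWith.of_dist_le_mul fun κ κ' => by
    refine (ContinuousMap.dist_le (by positivity)).2 fun r => ?_
    calc dist (weightedT κ r) (weightedT κ' r)
        = Real.exp (-(M * r)) * ‖T (path κ) r - T (path κ') r‖ := by
          rw [dist_eq_norm, ContinuousMap.coe_mk, ContinuousMap.coe_mk, ← smul_sub, norm_smul,
            Real.norm_of_nonneg (Real.exp_pos _).le]
      _ ≤ Real.exp (-(M * r)) * (K * (dist κ κ' * Real.exp (M * r))) := by
          gcongr
          exact hcontr _ _ (hpath κ) (hpath κ') _ dist_nonneg (fun s _ => hpath_sub κ κ' s) r r.2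
      _ = K * dist κ κ' := by rw [Real.exp_neg]; field_simp
  obtain ⟨κ, hκ, -⟩ := ContractingWith.exists_fixedPoint ⟨hK, hlip⟩ 0 (edist_ne_top _ _)
  refine ⟨path κ, hpath κ, fun r hr => ?_⟩
  have hfix : Real.exp (-(M * r)) • T (path κ) r = κ ⟨r, hr⟩ := congr($hκ ⟨r, hr⟩)
  simp only [path, IccExtend_of_mem hR _ hr, ← hfix, smul_smul, ← Real.exp_add, add_neg_cancel,
    Real.exp_zero, one_smul]

/-- A history operator `N`, sending a path `u` to a path `N u`, is causally Lipschitz on `[0, R]` if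
`N u r` depends on `u` only through its restriction to `[0, r]`, and does so Lipschitz continuously
for the uniform norm; differential equations `u' = N u` for such `N` are well posed. -/
structure IsCausalLipschitz {E : Type*} [NormedAddCommGroup E] (N : (ℝ → E) → ℝ → E)
    (L : NNReal) (R : ℝ) : Prop where
  continuous_apply {u : ℝ → E} : Continuous u → Continuous (N u)
  norm_sub_le {u v : ℝ → E} {r δ : ℝ} : Continuous u → Continuous v → r ∈ Icc 0 R →
    (∀ s ∈ Icc 0 r, ‖u s - v s‖ ≤ δ) → ‖N u r - N v r‖ ≤ L * δ

namespace IsCausalLipschitz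

variable {E : Type*} [NormedAddCommGroup E] {N : (ℝ → E) → ℝ → E} {L : NNReal} {R r : ℝ}
  {u v : ℝ → E}

lemma congr (hN : IsCausalLipschitz N L R) (hu : Continuous u) (hv : Continuous v)
    (hr : r ∈ Icc 0 R) (h : EqOn u v (Icc 0 r)) : N u r = N v r := by
  have := hN.norm_sub_le (δ := 0) hu hv hr fun s hs => by rw [h hs, sub_self, norm_zero]
  rwa [mul_zero, norm_le_zero_iff, sub_eq_zero] at this

variable [NormedSpace ℝ E]

lemma norm_integral_sub_le (hN : IsCausalLipschitz N L R) (hu : Continuous u) (hv : Continuous v)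
    {M D : ℝ} (hM : 0 < M) (hD : 0 ≤ D) (hr : r ∈ Icc 0 R)
    (h : ∀ s ∈ Icc 0 r, ‖u s - v s‖ ≤ D * Real.exp (M * s)) :
    ‖(∫ x in (0 : ℝ)..r, N u x) - ∫ x in (0 : ℝ)..r, N v x‖ ≤ L / M * (D * Real.exp (M * r)) := by
  have hpointwise : ∀ x ∈ Ioc 0 r, ‖N u x - N v x‖ ≤ L * (D * Real.exp (M * x)) := fun x hx =>
    hN.norm_sub_le hu hv ⟨hx.1.le, hx.2.trans hr.2⟩ fun s hs =>
      (h s ⟨hs.1, hs.2.trans hx.2⟩).trans (by gcongr; exact hs.2)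
  have hexp : ∫ x in (0 : ℝ)..r, Real.exp (M * x) ≤ Real.exp (M * r) / M := by
    rw [intervalIntegral.integral_comp_mul_left Real.exp hM.ne', integral_exp, mul_zero,
      Real.exp_zero, smul_eq_mul, inv_mul_eq_div]
    gcongr
    linarith
  calc ‖(∫ x in (0 : ℝ)..r, N u x) - ∫ x in (0 : ℝ)..r, N v x‖
      = ‖∫ x in (0 : ℝ)..r, (N u x - N v x)‖ := by
        rw [intervalIntegral.integral_sub ((hN.continuous_apply hu).intervalIntegrable _ _)
          ((hN.continuous_apply hv).intervalIntegrable _ _)]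
    _ ≤ ∫ x in (0 : ℝ)..r, L * (D * Real.exp (M * x)) :=
        intervalIntegral.norm_integral_le_of_norm_le hr.1 (Eventually.of_forall hpointwise)
          (Continuous.intervalIntegrable (by fun_prop) _ _)
    _ = L * D * ∫ x in (0 : ℝ)..r, Real.exp (M * x) := by
        rw [intervalIntegral.integral_const_mul, intervalIntegral.integral_const_mul, mul_assoc]
    _ ≤ L * D * (Real.exp (M * r) / M) := by gcongr
    _ = L / M * (D * Real.exp (M * r)) := by ring

variable [CompleteSpace E]

lemma exists_eqOn_add_integral (hN : IsCausalLipschitz N L R) (hR : 0 ≤ R) (u₀ : E) :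
    ∃ u : ℝ → E, Continuous u ∧ EqOn u (fun r => u₀ + ∫ x in (0 : ℝ)..r, N u x) (Icc 0 R) := by
  refine exists_eqOn_of_exp_weighted_contraction (K := L / (L + 1)) (M := L + 1) hR
    ((div_lt_one (by positivity)).2 (lt_add_one L)) (fun u hu => ?_)
    fun u v hu hv D hD h r hr => ?_
  · exact continuous_const.add (intervalIntegral.continuous_primitive
      (fun _ _ => (hN.continuous_apply hu).intervalIntegrable _ _) 0)
  · rw [add_sub_add_left_eq_sub]
    exact hN.norm_integral_sub_le hu hv (by positivity) hD hr
      fun s hs => h s ⟨hs.1, hs.2.trans hr.2⟩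

theorem exists_hasDerivAt (hN : IsCausalLipschitz N L R) (hR : 0 ≤ R) (u₀ : E) :
    ∃ u : ℝ → E, Continuous u ∧ u 0 = u₀ ∧ ∀ r ∈ Icc 0 R, HasDerivAt u (N u r) r := by
  obtain ⟨w, hw, hw_eq⟩ := hN.exists_eqOn_add_integral hR u₀
  set u : ℝ → E := fun r => u₀ + ∫ x in (0 : ℝ)..r, N w x
  have hderiv (r : ℝ) : HasDerivAt u (N w r) r :=
    ((hN.continuous_apply hw).integral_hasStrictDerivAt 0 r).hasDerivAt.const_add u₀
  have hu : Continuous u := continuous_iff_continuousAt.2 fun r => (hderiv r).continuousAt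
  refine ⟨u, hu, by simp only [u, intervalIntegral.integral_same, add_zero], fun r hr => ?_⟩
  rw [hN.congr hu hw hr (hw_eq.symm.mono (Icc_subset_Icc_right hr.2))]
  exact hderiv r

theorem eqOn_of_hasDerivAt (hN : IsCausalLipschitz N L R) (hu : Continuous u) (hv : Continuous v)
    (h0 : u 0 = v 0) (hu' : ∀ r ∈ Ioo 0 R, HasDerivAt u (N u r) r)
    (hv' : ∀ r ∈ Ioo 0 R, HasDerivAt v (N v r) r) : EqOn u v (Icc 0 R) := by
  rcases lt_or_ge R 0 with hR | hR
  · simp [Icc_eq_empty_of_lt hR]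
  set M : ℝ := L + 1
  have hM : 0 < M := by positivity
  have hftc {w : ℝ → E} (hw : Continuous w) (hw' : ∀ r ∈ Ioo 0 R, HasDerivAt w (N w r) r) {r : ℝ}
      (hr : r ∈ Icc 0 R) : ∫ x in (0 : ℝ)..r, N w x = w r - w 0 :=
    intervalIntegral.integral_eq_sub_of_hasDerivAt_of_le hr.1 hw.continuousOn
      (fun x hx => hw' x ⟨hx.1, hx.2.trans_le hr.2⟩)
      ((hN.continuous_apply hw).intervalIntegrable _ _)
  obtain ⟨m, hm, hmax⟩ := isCompact_Icc.exists_isMaxOn (nonempty_Icc.2 hR)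
    (Continuous.div (by fun_prop) (by fun_prop) fun r => (Real.exp_pos (M * r)).ne' :
      Continuous fun r => ‖u r - v r‖ / Real.exp (M * r)).continuousOn
  set D := ‖u m - v m‖ / Real.exp (M * m)
  have hD : 0 ≤ D := by positivity
  have hbound : ∀ s ∈ Icc 0 R, ‖u s - v s‖ ≤ D * Real.exp (M * s) := fun s hs =>
    (div_le_iff₀ (Real.exp_pos _)).1 (hmax hs)
  have hself : D * Real.exp (M * m) ≤ L / M * (D * Real.exp (M * m)) := by
    have := hN.norm_integral_sub_le hu hv hM hD hm fun s hs => hbound s ⟨hs.1, hs.2.trans hm.2⟩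
    rw [hftc hu hu' hm, hftc hv hv' hm, h0, sub_sub_sub_cancel_right] at this
    rwa [div_mul_cancel₀ _ (Real.exp_pos _).ne'] at this ⊢
  have hD0 : D ≤ 0 := by
    have hlt : L / M < 1 := (div_lt_one hM).2 (lt_add_one _)
    by_contra! hpos
    nlinarith [mul_pos hpos (Real.exp_pos (M * m))]
  intro s hs
  have := (hbound s hs).trans (mul_nonpos_of_nonpos_of_nonneg hD0 (Real.exp_pos _).le)
  rwa [norm_le_zero_iff, sub_eq_zero] at this

end IsCausalLipschitz

/-! ### Continuation -/

lemma pos_of_no_first_zero {g : ℝ → ℝ} {a b : ℝ} (hg : ContinuousOn g (Icc a b)) (ha : 0 < g a)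
    (h : ∀ r ∈ Ioc a b, (∀ x ∈ Ico a r, 0 < g x) → g r ≠ 0) : ∀ r ∈ Icc a b, 0 < g r := by
  by_contra! hneg
  have hcompact : IsCompact (Icc a b ∩ g ⁻¹' Iic 0) :=
    isCompact_Icc.of_isClosed_subset (hg.preimage_isClosed_of_isClosed isClosed_Icc isClosed_Iic)
      inter_subset_left
  obtain ⟨m, ⟨hm, hgm⟩, hleast⟩ := hcompact.exists_isLeast hneg
  have hpos : ∀ x ∈ Ico a m, 0 < g x := fun x hx => by
    by_contra! hx'
    exact hx.2.not_ge (hleast ⟨⟨hx.1, hx.2.le.trans hm.2⟩, hx'⟩)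
  obtain ⟨z, hz, hgz⟩ :=
    intermediate_value_Icc' hm.1 (hg.mono (Icc_subset_Icc_right hm.2)) ⟨hgm, ha.le⟩
  obtain rfl | hzm := hz.2.eq_or_lt
  · exact h z ⟨hm.1.lt_of_ne fun haz => ha.ne' (haz ▸ hgz), hm.2⟩ hpos hgz
  · exact (hpos z ⟨hz.1, hzm⟩).ne' hgz

lemma exists_continuous_eqOn_Icc {X : Type*} [TopologicalSpace X] {u : ℕ → ℝ → X}
    (hu : ∀ n, Continuous (u n)) (h : ∀ m n, m ≤ n → EqOn (u m) (u n) (Icc 0 m)) :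
    ∃ v, Continuous v ∧ ∀ n : ℕ, EqOn v (u n) (Icc 0 n) := by
  let v (r : ℝ) : X := u ⌈|r|⌉₊ |r|
  have hv {n : ℕ} {r : ℝ} (hr : |r| ≤ n) : v r = u n |r| :=
    h _ n (Nat.ceil_le.2 hr) ⟨abs_nonneg r, Nat.le_ceil _⟩
  refine ⟨v, continuous_iff_continuousAt.2 fun r => ?_, fun n r hr => ?_⟩
  · obtain ⟨n, hn⟩ := exists_nat_gt |r|
    refine ((hu n).comp continuous_abs).continuousAt.congr ?_
    filter_upwards [continuous_abs.continuousAt.eventually_lt_const hn] with x hx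
    exact (hv hx.le).symm
  · rw [hv ((abs_of_nonneg hr.1).trans_le hr.2), abs_of_nonneg hr.1]

/-! ### The reduced problem -/

/-- The function `h = 1 + r f`, `f = radialMean a S`, recovered from `S = h' + a (h - 1) / r`. -/
noncomputable def profile (a : ℝ) (S : ℝ → ℝ) (r : ℝ) : ℝ := 1 + r * radialMean a S r

/-- The derivative `h' = S - a f` of `h = profile a S`, where `f = radialMean a S = (h - 1) / r`. -/
noncomputable def profileSlope (a : ℝ) (S : ℝ → ℝ) (r : ℝ) : ℝ := S r - a * radialMean a S r

/-- The triple `(S, f, h)` on which the reduced equation depends, `f = (h - 1) / r`. -/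
noncomputable def reducedState (a : ℝ) (S : ℝ → ℝ) (r : ℝ) : ℝ × ℝ × ℝ :=
  (S r, radialMean a S r, profile a S r)

/-- The right-hand side `(S - a f) (S + a f - λ) / (2 h)` of the reduced equation for `S'`, as a
function of `p = (S, f, h)`. -/
noncomputable def reducedField (a lam : ℝ) (p : ℝ × ℝ × ℝ) : ℝ :=
  (p.1 - a * p.2.1) * (p.1 + a * p.2.1 - lam) / (2 * p.2.2)

/-- `S` solves on `(0, R]` the equation obtained from the initial value problem with `n - 1 = 2 a`
by the substitution `S = h' + a (h - 1) / r`, and the corresponding `h` is positive there. -/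
structure IsReducedSol (a lam μ R : ℝ) (S : ℝ → ℝ) : Prop where
  continuous : Continuous S
  map_zero : S 0 = (a + 1) * μ
  profile_pos_of_mem_Ioc : ∀ r ∈ Ioc 0 R, 0 < profile a S r
  hasDerivAt : ∀ r ∈ Ioc 0 R, HasDerivAt S (reducedField a lam (reducedState a S r)) r

section Profile

variable {a r : ℝ} {S : ℝ → ℝ}

lemma profile_apply_zero : profile a S 0 = 1 := by
  rw [profile, zero_mul, add_zero]

lemma continuous_profile (ha : 0 ≤ a) (hS : Continuous S) : Continuous (profile a S) :=
  continuous_const.add (continuous_id.mul (continuous_radialMean ha hS))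

lemma continuous_profileSlope (ha : 0 ≤ a) (hS : Continuous S) : Continuous (profileSlope a S) :=
  hS.sub (continuous_const.mul (continuous_radialMean ha hS))

lemma continuous_reducedState (ha : 0 ≤ a) (hS : Continuous S) : Continuous (reducedState a S) :=
  hS.prodMk ((continuous_radialMean ha hS).prodMk (continuous_profile ha hS))

lemma hasDerivAt_mul_self_zero {f : ℝ → ℝ} (hf : ContinuousAt f 0) :
    HasDerivAt (fun r => r * f r) (f 0) 0 := by
  rw [hasDerivAt_iff_tendsto_slope]
  refine (hf.tendsto.mono_left nhdsWithin_le_nhds).congr' ?_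
  filter_upwards [self_mem_nhdsWithin] with r hr
  rw [slope_def_field, zero_mul, sub_zero, sub_zero, mul_div_cancel_left₀ _ hr]

lemma hasDerivAt_profile (ha : 0 ≤ a) (hS : Continuous S) (hr : 0 ≤ r) :
    HasDerivAt (profile a S) (profileSlope a S r) r := by
  rcases hr.eq_or_lt with rfl | hr
  · refine ((hasDerivAt_mul_self_zero
      (continuous_radialMean ha hS).continuousAt).const_add 1).congr_deriv ?_
    rw [profileSlope, radialMean_apply_zero ha]
    field_simp
    ring
  · refine (((hasDerivAt_id' r).mul (hasDerivAt_radialMean ha hS hr)).const_add 1).congr_deriv ?_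
    rw [profileSlope]
    field_simp
    ring

lemma norm_reducedState_sub_le {T : ℝ → ℝ} {R δ : ℝ} (ha : 0 ≤ a) (hS : Continuous S)
    (hT : Continuous T) (hr : r ∈ Icc 0 R) (h : ∀ s ∈ Icc 0 r, ‖S s - T s‖ ≤ δ) :
    ‖reducedState a S r - reducedState a T r‖ ≤ (1 + R) * δ := by
  have hmean : |radialMean a S r - radialMean a T r| ≤ δ := abs_radialMean_sub_le ha hS hT hr.1 h
  have hδ : 0 ≤ δ := (abs_nonneg _).trans hmean
  have hδR : δ ≤ (1 + R) * δ := le_mul_of_one_le_left hδ (by linarith [hr.1.trans hr.2])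
  refine max_le ((h r (right_mem_Icc.2 hr.1)).trans hδR) (max_le (hmean.trans hδR) ?_)
  calc ‖profile a S r - profile a T r‖ = r * |radialMean a S r - radialMean a T r| := by
        rw [profile, profile, add_sub_add_left_eq_sub, ← mul_sub, norm_mul,
          Real.norm_of_nonneg hr.1, Real.norm_eq_abs]
    _ ≤ (1 + R) * δ := by
        gcongr
        · linarith [hr.1.trans hr.2]
        · linarith [hr.2]

lemma isCausalLipschitz_comp_reducedState {g : ℝ × ℝ × ℝ → ℝ} {L : NNReal} {R : ℝ} (ha : 0 ≤ a)
    (hg : LipschitzWith L g) :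
    IsCausalLipschitz (fun S r => g (reducedState a S r)) (L * (1 + R.toNNReal)) R where
  continuous_apply hS := hg.continuous.comp (continuous_reducedState ha hS)
  norm_sub_le hS hT hr h := by
    push_cast
    rw [mul_assoc]
    refine (hg.norm_sub_le _ _).trans (mul_le_mul_of_nonneg_left ?_ L.coe_nonneg)
    exact norm_reducedState_sub_le ha hS hT ⟨hr.1, hr.2.trans (Real.le_coe_toNNReal R)⟩ h

/-- A McShane extension, which replaces the singular field by a globally Lipschitz one. -/
lemma exists_lipschitzWith_eqOn_reducedField (a lam : ℝ) {K : Set (ℝ × ℝ × ℝ)} (hK : IsCompact K)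
    (hpos : ∀ p ∈ K, 0 < p.2.2) : ∃ L g, LipschitzWith L g ∧ EqOn (reducedField a lam) g K := by
  have hsmooth : ContDiffOn ℝ 1 (reducedField a lam) {p | 0 < p.2.2} := by
    refine ContDiffOn.div (by fun_prop) (by fun_prop) fun p hp => ?_
    exact mul_ne_zero two_ne_zero (ne_of_gt hp)
  have hconvex : Convex ℝ {p : ℝ × ℝ × ℝ | 0 < p.2.2} :=
    convex_halfSpace_gt ⟨fun _ _ => rfl, fun _ _ => rfl⟩ 0
  obtain ⟨L, hL⟩ :=
    ((hsmooth.locallyLipschitzOn hconvex).mono hpos).exists_lipschitzOnWith_of_compact hK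
  exact ⟨L, hL.extend_real⟩

end Profile

namespace IsReducedSol

variable {a lam μ R R' r : ℝ} {S T : ℝ → ℝ}

lemma mono (h : IsReducedSol a lam μ R S) (hR : R' ≤ R) : IsReducedSol a lam μ R' S where
  continuous := h.continuous
  map_zero := h.map_zero
  profile_pos_of_mem_Ioc r hr := h.profile_pos_of_mem_Ioc r ⟨hr.1, hr.2.trans hR⟩
  hasDerivAt r hr := h.hasDerivAt r ⟨hr.1, hr.2.trans hR⟩

lemma profile_pos (h : IsReducedSol a lam μ R S) (hr : r ∈ Icc 0 R) : 0 < profile a S r := by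
  rcases hr.1.eq_or_lt with rfl | hr0
  · exact profile_apply_zero.symm ▸ one_pos
  · exact h.profile_pos_of_mem_Ioc r ⟨hr0, hr.2⟩

lemma congr (h : IsReducedSol a lam μ R S) (hR : 0 ≤ R) (hT : Continuous T)
    (hST : EqOn S T (Icc 0 R)) (hlt : R' < R) : IsReducedSol a lam μ R' T := by
  have hmean : EqOn (radialMean a S) (radialMean a T) (Icc 0 R) := fun r hr =>
    radialMean_congr hr.1 (hST.mono (Icc_subset_Icc_right hr.2))
  have hstate : EqOn (reducedState a S) (reducedState a T) (Icc 0 R) := fun r hr => by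
    rw [reducedState, reducedState, profile, profile, hST hr, hmean hr]
  refine ⟨hT, hST (left_mem_Icc.2 hR) ▸ h.map_zero, fun r hr => ?_, fun r hr => ?_⟩
  · have hrR : r ∈ Icc 0 R := ⟨hr.1.le, hr.2.trans hlt.le⟩
    rw [profile, ← hmean hrR]
    exact h.profile_pos hrR
  · rw [← hstate ⟨hr.1.le, hr.2.trans hlt.le⟩]
    refine (h.hasDerivAt r ⟨hr.1, hr.2.trans hlt.le⟩).congr_of_eventuallyEq ?_
    exact hST.symm.eventuallyEq_of_mem (Icc_mem_nhds hr.1 (hr.2.trans_lt hlt))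

theorem eqOn (hS : IsReducedSol a lam μ R S) (ha : 0 ≤ a) (hT : IsReducedSol a lam μ R T) :
    EqOn S T (Icc 0 R) := by
  have hcompact {U : ℝ → ℝ} (hU : IsReducedSol a lam μ R U) :
      IsCompact (reducedState a U '' Icc 0 R) :=
    isCompact_Icc.image (continuous_reducedState ha hU.continuous)
  obtain ⟨L, g, hg, hgK⟩ := exists_lipschitzWith_eqOn_reducedField a lam
    ((hcompact hS).union (hcompact hT)) (by
      rintro _ (⟨r, hr, rfl⟩ | ⟨r, hr, rfl⟩)
      exacts [hS.profile_pos hr, hT.profile_pos hr])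
  refine (isCausalLipschitz_comp_reducedState ha hg).eqOn_of_hasDerivAt hS.continuous
    hT.continuous (hS.map_zero.trans hT.map_zero.symm) (fun r hr => ?_) fun r hr => ?_
  · rw [← hgK (Or.inl (mem_image_of_mem _ (Ioo_subset_Icc_self hr)))]
    exact hS.hasDerivAt r (Ioo_subset_Ioc_self hr)
  · rw [← hgK (Or.inr (mem_image_of_mem _ (Ioo_subset_Icc_self hr)))]
    exact hT.hasDerivAt r (Ioo_subset_Ioc_self hr)

end IsReducedSol

theorem exists_isReducedSol_of_bounds {a lam μ R A ε : ℝ} (ha : 0 ≤ a) (hR : 0 ≤ R) (hε : 0 < ε)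
    (hbound : ∀ ρ ∈ Icc 0 R, ∀ S, IsReducedSol a lam μ ρ S →
      ∀ r ∈ Icc 0 ρ, ‖reducedState a S r‖ < A ∧ ε < profile a S r) :
    ∃ S, IsReducedSol a lam μ R S := by
  let K : Set (ℝ × ℝ × ℝ) := Metric.closedBall 0 A ∩ {p | ε ≤ p.2.2}
  have hK : IsCompact K := (isCompact_closedBall 0 A).inter_right
    (isClosed_le continuous_const (by fun_prop))
  obtain ⟨L, g, hg, hgK⟩ :=
    exists_lipschitzWith_eqOn_reducedField a lam hK fun p hp => hε.trans_le hp.2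
  obtain ⟨S, hS, hS0, hS'⟩ := (isCausalLipschitz_comp_reducedState (R := R) ha hg).exists_hasDerivAt
    hR ((a + 1) * μ)
  have hsol {ρ : ℝ} (hρ : ρ ≤ R) (hstate : ∀ x ∈ Ioc 0 ρ, reducedState a S x ∈ K) :
      IsReducedSol a lam μ ρ S :=
    ⟨hS, hS0, fun r hr => hε.trans_le (hstate r hr).2, fun r hr =>
      hgK (hstate r hr) ▸ hS' r ⟨hr.1.le, hr.2.trans hρ⟩⟩
  let margin (r : ℝ) : ℝ := min (A - ‖reducedState a S r‖) (profile a S r - ε)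
  have hmargin_cont : Continuous margin :=
    (continuous_const.sub (continuous_reducedState ha hS).norm).min
      ((continuous_profile ha hS).sub continuous_const)
  have hmargin_pos {ρ : ℝ} (hρ : ρ ∈ Icc 0 R) (hSρ : IsReducedSol a lam μ ρ S) : 0 < margin ρ :=
    have := hbound ρ hρ S hSρ ρ (right_mem_Icc.2 hρ.1)
    lt_min (sub_pos.2 this.1) (sub_pos.2 this.2)
  have hmem {r : ℝ} (hr : 0 ≤ margin r) : reducedState a S r ∈ K :=
    ⟨mem_closedBall_zero_iff.2 (sub_nonneg.1 (le_min_iff.1 hr).1), sub_nonneg.1 (le_min_iff.1 hr).2⟩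
  have hpos : ∀ r ∈ Icc 0 R, 0 < margin r := by
    refine pos_of_no_first_zero hmargin_cont.continuousOn
      (hmargin_pos (left_mem_Icc.2 hR) (hsol hR (by simp))) fun r hr hlt hzero => ?_
    refine (hmargin_pos ⟨hr.1.le, hr.2⟩ (hsol hr.2 fun x hx => hmem ?_)).ne' hzero
    rcases hx.2.eq_or_lt with rfl | hxr
    · exact hzero.ge
    · exact (hlt x ⟨hx.1.le, hxr⟩).le
  exact ⟨S, hsol le_rfl fun x hx => hmem (hpos x (Ioc_subset_Icc_self hx)).le⟩

/-! ### A priori estimates -/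

lemma monotoneOn_Icc_of_hasDerivAt_nonneg {f f' : ℝ → ℝ} {a b : ℝ} (hf : ContinuousOn f (Icc a b))
    (hf' : ∀ x ∈ Ioo a b, HasDerivAt f (f' x) x) (hnonneg : ∀ x ∈ Ioo a b, 0 ≤ f' x) :
    MonotoneOn f (Icc a b) := by
  refine monotoneOn_of_hasDerivWithinAt_nonneg (f' := f') (convex_Icc a b) hf ?_ ?_ <;>
    rw [interior_Icc]
  exacts [fun x hx => (hf' x hx).hasDerivWithinAt, hnonneg]

lemma antitoneOn_Icc_of_hasDerivAt_nonpos {f f' : ℝ → ℝ} {a b : ℝ} (hf : ContinuousOn f (Icc a b))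
    (hf' : ∀ x ∈ Ioo a b, HasDerivAt f (f' x) x) (hnonpos : ∀ x ∈ Ioo a b, f' x ≤ 0) :
    AntitoneOn f (Icc a b) := by
  refine antitoneOn_of_hasDerivWithinAt_nonpos (f' := f') (convex_Icc a b) hf ?_ ?_ <;>
    rw [interior_Icc]
  exacts [fun x hx => (hf' x hx).hasDerivWithinAt, hnonpos]

lemma reducedField_reducedState {a lam r : ℝ} {S : ℝ → ℝ} :
    reducedField a lam (reducedState a S r) =
      profileSlope a S r * (profileSlope a S r + 2 * a * radialMean a S r - lam) /
        (2 * profile a S r) := by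
  simp only [reducedField, reducedState, profileSlope]
  ring

lemma norm_reducedState_le (a : ℝ) (S : ℝ → ℝ) (r : ℝ) :
    ‖reducedState a S r‖ ≤ |S r| + |radialMean a S r| + |profile a S r| := by
  have hS := abs_nonneg (S r)
  have hf := abs_nonneg (radialMean a S r)
  have hh := abs_nonneg (profile a S r)
  simp only [reducedState, Prod.norm_mk, Real.norm_eq_abs, sup_le_iff]
  exact ⟨by linarith, by linarith, by linarith⟩

lemma mul_radialMean_pos_of_mul_profileSlope_pos {a μ r : ℝ} {S : ℝ → ℝ} (ha : 0 ≤ a)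
    (hS : Continuous S) (hr : 0 < r) (hslope : ∀ x ∈ Ioo 0 r, 0 < μ * profileSlope a S x) :
    0 < μ * radialMean a S r := by
  have hmono : StrictMonoOn (fun x => μ * profile a S x) (Icc 0 r) := by
    refine strictMonoOn_of_hasDerivWithinAt_pos (f' := fun x => μ * profileSlope a S x)
      (convex_Icc 0 r) (continuous_const.mul (continuous_profile ha hS)).continuousOn ?_ ?_ <;>
      rw [interior_Icc]
    exacts [fun x hx => ((hasDerivAt_profile ha hS hx.1.le).const_mul μ).hasDerivWithinAt, hslope]
  have hlt : μ * 1 < μ * profile a S r := by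
    simpa only [profile_apply_zero] using hmono (left_mem_Icc.2 hr.le) (right_mem_Icc.2 hr.le) hr
  rw [profile] at hlt
  exact (pos_iff_pos_of_mul_pos (by linarith : 0 < r * (μ * radialMean a S r))).1 hr

namespace IsReducedSol

variable {a lam μ R r : ℝ} {S : ℝ → ℝ}

lemma radialMean_zero_eq (h : IsReducedSol a lam μ R S) (ha : 0 ≤ a) : radialMean a S 0 = μ := by
  rw [radialMean_apply_zero ha, h.map_zero, mul_div_cancel_left₀ _ (by linarith)]

lemma profileSlope_zero_eq (h : IsReducedSol a lam μ R S) (ha : 0 ≤ a) :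
    profileSlope a S 0 = μ := by
  rw [profileSlope, h.radialMean_zero_eq ha, h.map_zero]
  ring

lemma hasDerivAt_profileSlope (h : IsReducedSol a lam μ R S) (ha : 0 ≤ a) (hr : r ∈ Ioc 0 R) :
    HasDerivAt (profileSlope a S)
      (profileSlope a S r * (profileSlope a S r + 2 * a * radialMean a S r - lam) /
          (2 * profile a S r) - a * (profileSlope a S r - radialMean a S r) / r) r := by
  refine ((h.hasDerivAt r hr).sub
    ((hasDerivAt_radialMean ha h.continuous hr.1).const_mul a)).congr_deriv ?_
  rw [reducedField_reducedState, profileSlope]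
  ring

/-- At a first zero of `P = h'` the equation reads `P' = a f / r`, and `f = (h - 1) / r` still has
the sign of `μ`. -/
theorem mul_profileSlope_pos (h : IsReducedSol a lam μ R S) (ha : 0 < a) (hμ : μ ≠ 0) :
    ∀ r ∈ Icc 0 R, 0 < μ * profileSlope a S r := by
  refine pos_of_no_first_zero
    (continuous_const.mul (continuous_profileSlope ha.le h.continuous)).continuousOn
    (by rw [h.profileSlope_zero_eq ha.le]; exact mul_self_pos.2 hμ) fun r hr hpos hzero => ?_
  have hP : profileSlope a S r = 0 := (mul_eq_zero.1 hzero).resolve_left hμ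
  have hf : 0 < μ * radialMean a S r := mul_radialMean_pos_of_mul_profileSlope_pos ha.le
    h.continuous hr.1 fun x hx => hpos x ⟨hx.1.le, hx.2⟩
  have hderiv : 0 < deriv (fun x => μ * profileSlope a S x) r := by
    rw [((h.hasDerivAt_profileSlope ha.le hr).const_mul μ).deriv, hP]
    calc 0 < a * (μ * radialMean a S r) / r := div_pos (mul_pos ha hf) hr.1
      _ = _ := by ring
  have hsign := (eventually_nhdsWithin_sign_eq_of_deriv_pos hderiv hzero).filter_mono
    (nhdsWithin_le_nhds (s := Iio r))
  obtain ⟨x, hx, hx0, hxr⟩ := (hsign.and (Ioo_mem_nhdsLT hr.1)).exists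
  rw [sign_pos (hpos x ⟨hx0.le, hxr⟩), sign_neg (sub_neg.2 hxr)] at hx
  exact absurd hx (by decide)

theorem mul_radialMean_pos (h : IsReducedSol a lam μ R S) (ha : 0 < a) (hμ : μ ≠ 0)
    (hr : r ∈ Icc 0 R) : 0 < μ * radialMean a S r := by
  rcases hr.1.eq_or_lt with rfl | hr0
  · rw [h.radialMean_zero_eq ha.le]
    exact mul_self_pos.2 hμ
  · exact mul_radialMean_pos_of_mul_profileSlope_pos ha.le h.continuous hr0 fun x hx =>
      h.mul_profileSlope_pos ha hμ x ⟨hx.1.le, hx.2.le.trans hr.2⟩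

lemma profileSlope_pos (h : IsReducedSol a lam μ R S) (ha : 0 < a) (hμ : 0 < μ)
    (hr : r ∈ Icc 0 R) : 0 < profileSlope a S r :=
  pos_of_mul_pos_right (h.mul_profileSlope_pos ha hμ.ne' r hr) hμ.le

lemma radialMean_pos (h : IsReducedSol a lam μ R S) (ha : 0 < a) (hμ : 0 < μ)
    (hr : r ∈ Icc 0 R) : 0 < radialMean a S r :=
  pos_of_mul_pos_right (h.mul_radialMean_pos ha hμ.ne' hr) hμ.le

/-- The quotient `S / h` is decreasing: its derivative is `-h' (h' + λ) / (2 h²)`. -/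
lemma apply_le_mul_profile (h : IsReducedSol a lam μ R S) (ha : 0 < a) (hlam : 0 ≤ lam) (hμ : 0 < μ)
    (hr : r ∈ Icc 0 R) : S r ≤ (a + 1) * μ * profile a S r := by
  have hcont : ContinuousOn (fun x => S x / profile a S x) (Icc 0 R) :=
    h.continuous.continuousOn.div (continuous_profile ha.le h.continuous).continuousOn
      fun x hx => (h.profile_pos hx).ne'
  have hderiv : ∀ x ∈ Ioo 0 R, HasDerivAt (fun x => S x / profile a S x)
      (-(profileSlope a S x * (profileSlope a S x + lam) / (2 * profile a S x ^ 2))) x := by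
    intro x hx
    have hne := (h.profile_pos (Ioo_subset_Icc_self hx)).ne'
    refine ((h.hasDerivAt x (Ioo_subset_Ioc_self hx)).div
      (hasDerivAt_profile ha.le h.continuous hx.1.le) hne).congr_deriv ?_
    rw [reducedField_reducedState]
    field_simp
    rw [profileSlope]
    ring
  have hanti := antitoneOn_Icc_of_hasDerivAt_nonpos hcont hderiv fun x hx => by
    have hP := h.profileSlope_pos ha hμ (Ioo_subset_Icc_self hx)
    exact neg_nonpos.2 (by positivity)
  have hle := hanti (left_mem_Icc.2 (hr.1.trans hr.2)) hr hr.1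
  simp only [profile_apply_zero, h.map_zero, div_one] at hle
  exact (div_le_iff₀ (h.profile_pos hr)).1 hle

lemma profile_le_exp (h : IsReducedSol a lam μ R S) (ha : 0 < a) (hlam : 0 ≤ lam) (hμ : 0 < μ)
    (hr : r ∈ Icc 0 R) : profile a S r ≤ Real.exp ((a + 1) * μ * r) := by
  set c := (a + 1) * μ
  have hcont : Continuous fun x => profile a S x * Real.exp (-c * x) :=
    (continuous_profile ha.le h.continuous).mul (by fun_prop)
  have hderiv : ∀ x ∈ Ioo 0 R, HasDerivAt (fun x => profile a S x * Real.exp (-c * x))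
      ((profileSlope a S x - c * profile a S x) * Real.exp (-c * x)) x := fun x hx => by
    refine ((hasDerivAt_profile ha.le h.continuous hx.1.le).mul
      ((hasDerivAt_id' x).const_mul (-c)).exp).congr_deriv ?_
    ring
  have hanti := antitoneOn_Icc_of_hasDerivAt_nonpos hcont.continuousOn hderiv fun x hx => by
    have hxR := Ioo_subset_Icc_self hx
    refine mul_nonpos_of_nonpos_of_nonneg ?_ (Real.exp_pos _).le
    rw [profileSlope]
    linarith [h.apply_le_mul_profile ha hlam hμ hxR, mul_pos ha (h.radialMean_pos ha hμ hxR)]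
  have hle := hanti (left_mem_Icc.2 (hr.1.trans hr.2)) hr hr.1
  simp only [profile_apply_zero, mul_zero, Real.exp_zero, mul_one, neg_mul, Real.exp_neg] at hle
  rwa [mul_inv_le_iff₀ (Real.exp_pos _), one_mul] at hle

lemma one_le_profile (h : IsReducedSol a lam μ R S) (ha : 0 < a) (hμ : 0 < μ)
    (hr : r ∈ Icc 0 R) : 1 ≤ profile a S r :=
  le_add_of_nonneg_right (mul_nonneg hr.1 (h.radialMean_pos ha hμ hr).le)

theorem norm_reducedState_le_of_pos (h : IsReducedSol a lam μ R S) (ha : 0 < a) (hlam : 0 ≤ lam)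
    (hμ : 0 < μ) (hr : r ∈ Icc 0 R) :
    ‖reducedState a S r‖ ≤ ((a + 1) * μ + (a + 1) * μ / a + 1) * Real.exp ((a + 1) * μ * r) := by
  set c := (a + 1) * μ
  have hf := h.radialMean_pos ha hμ hr
  have hslope : 0 < S r - a * radialMean a S r := h.profileSlope_pos ha hμ hr
  have hprofile : profile a S r ≤ Real.exp (c * r) := h.profile_le_exp ha hlam hμ hr
  have hS : S r ≤ c * Real.exp (c * r) := (h.apply_le_mul_profile ha hlam hμ hr).trans (by gcongr)
  have hS0 : 0 < S r := (mul_pos ha hf).trans (sub_pos.1 hslope)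
  have hf_le : radialMean a S r ≤ c * Real.exp (c * r) / a := by
    rw [le_div_iff₀ ha]
    linarith
  calc ‖reducedState a S r‖ ≤ S r + radialMean a S r + profile a S r := by
        simpa only [abs_of_pos hS0, abs_of_pos hf, abs_of_pos (h.profile_pos hr)] using
          norm_reducedState_le a S r
    _ ≤ c * Real.exp (c * r) + c * Real.exp (c * r) / a + Real.exp (c * r) := by gcongr
    _ = _ := by ring

lemma profileSlope_neg (h : IsReducedSol a lam μ R S) (ha : 0 < a) (hμ : μ < 0)
    (hr : r ∈ Icc 0 R) : profileSlope a S r < 0 :=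
  neg_of_mul_pos_right (h.mul_profileSlope_pos ha hμ.ne r hr) hμ.le

lemma radialMean_neg (h : IsReducedSol a lam μ R S) (ha : 0 < a) (hμ : μ < 0)
    (hr : r ∈ Icc 0 R) : radialMean a S r < 0 :=
  neg_of_mul_pos_right (h.mul_radialMean_pos ha hμ.ne hr) hμ.le

lemma add_one_mul_le_apply (h : IsReducedSol a lam μ R S) (ha : 0 < a) (hlam : 0 ≤ lam) (hμ : μ < 0)
    (hr : r ∈ Icc 0 R) : (a + 1) * μ ≤ S r := by
  have hmono := monotoneOn_Icc_of_hasDerivAt_nonneg h.continuous.continuousOn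
    (fun x hx => h.hasDerivAt x (Ioo_subset_Ioc_self hx)) fun x hx => by
      have hxR := Ioo_subset_Icc_self hx
      have hP := h.profileSlope_neg ha hμ hxR
      have hf := mul_neg_of_pos_of_neg ha (h.radialMean_neg ha hμ hxR)
      rw [reducedField_reducedState]
      exact div_nonneg (mul_nonneg_of_nonpos_of_nonpos hP.le (by linarith))
        (mul_pos two_pos (h.profile_pos hxR)).le
  exact h.map_zero ▸ hmono (left_mem_Icc.2 (hr.1.trans hr.2)) hr hr.1

lemma apply_neg (h : IsReducedSol a lam μ R S) (ha : 0 < a) (hμ : μ < 0) (hr : r ∈ Icc 0 R) :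
    S r < 0 := by
  have hslope : S r - a * radialMean a S r < 0 := h.profileSlope_neg ha hμ hr
  linarith [mul_neg_of_pos_of_neg ha (h.radialMean_neg ha hμ hr)]

lemma hasDerivAt_add_mul_log_profile_sub {b : ℝ} (h : IsReducedSol a lam μ R S) (ha : 0 ≤ a)
    (hb : b ≠ 0) (hr : r ∈ Ioc 0 R) :
    HasDerivAt (fun x => S x + a / b * (Real.log (profile a S x) - profile a S x))
      ((profileSlope a S r * (profileSlope a S r - lam) +
          2 * a * (profileSlope a S r * radialMean a S r) * (1 - r / b)) /
        (2 * profile a S r)) r := by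
  have hne := (h.profile_pos_of_mem_Ioc r hr).ne'
  have hprofile := hasDerivAt_profile ha h.continuous hr.1.le
  refine ((h.hasDerivAt r hr).add
    (((hprofile.log hne).sub hprofile).const_mul (a / b))).congr_deriv ?_
  rw [reducedField_reducedState]
  field_simp
  rw [profile]
  ring

/-- The barrier `S + (a / b) (log h - h)` is increasing on `[0, R] ⊆ [0, b]`, since the negative
contribution of `log h - h` is at most the term `a h' f / h` of `S'`. -/
lemma le_add_mul_log_profile_sub {b : ℝ} (h : IsReducedSol a lam μ R S) (ha : 0 < a)
    (hlam : 0 ≤ lam) (hμ : μ < 0) (hb : 0 < b) (hRb : R ≤ b) (hr : r ∈ Icc 0 R) :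
    (a + 1) * μ - a / b ≤ S r + a / b * (Real.log (profile a S r) - profile a S r) := by
  have hprofile := (continuous_profile ha.le h.continuous).continuousOn (s := Icc 0 R)
  have hcont : ContinuousOn (fun x => S x + a / b * (Real.log (profile a S x) - profile a S x))
      (Icc 0 R) :=
    h.continuous.continuousOn.add (continuousOn_const.mul
      ((hprofile.log fun x hx => (h.profile_pos hx).ne').sub hprofile))
  have hmono := monotoneOn_Icc_of_hasDerivAt_nonneg hcont
    (fun x hx => h.hasDerivAt_add_mul_log_profile_sub ha.le hb.ne' (Ioo_subset_Ioc_self hx))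
    fun x hx => by
      have hxR := Ioo_subset_Icc_self hx
      have hP := h.profileSlope_neg ha hμ hxR
      have hPf := mul_pos_of_neg_of_neg hP (h.radialMean_neg ha hμ hxR)
      have hxb : 0 ≤ 1 - x / b := sub_nonneg.2 ((div_le_one hb).2 (hx.2.le.trans hRb))
      have hPlam := mul_nonneg_of_nonpos_of_nonpos hP.le
        (by linarith : profileSlope a S x - lam ≤ 0)
      have hpos := h.profile_pos hxR
      positivity
  have hle := hmono (left_mem_Icc.2 (hr.1.trans hr.2)) hr hr.1
  simpa only [profile_apply_zero, h.map_zero, Real.log_one, zero_sub, mul_neg, mul_one,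
    ← sub_eq_add_neg] using hle

lemma exp_lt_profile {b : ℝ} (h : IsReducedSol a lam μ R S) (ha : 0 < a) (hlam : 0 ≤ lam)
    (hμ : μ < 0) (hb : 0 < b) (hRb : R ≤ b) (hr : r ∈ Icc 0 R) :
    Real.exp (b * ((a + 1) * μ) / a - 1) < profile a S r := by
  have hab : 0 < a / b := div_pos ha hb
  rw [← Real.lt_log_iff_exp_lt (h.profile_pos hr)]
  refine lt_of_mul_lt_mul_left ?_ hab.le
  calc a / b * (b * ((a + 1) * μ) / a - 1) = (a + 1) * μ - a / b := by field_simp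
    _ ≤ S r + a / b * (Real.log (profile a S r) - profile a S r) :=
        h.le_add_mul_log_profile_sub ha hlam hμ hb hRb hr
    _ < a / b * Real.log (profile a S r) := by
        linarith [h.apply_neg ha hμ hr, mul_pos hab (h.profile_pos hr)]

theorem norm_reducedState_le_of_neg (h : IsReducedSol a lam μ R S) (ha : 0 < a) (hlam : 0 ≤ lam)
    (hμ : μ < 0) (hr : r ∈ Icc 0 R) :
    ‖reducedState a S r‖ ≤ -((a + 1) * μ) + -((a + 1) * μ) / a + 1 := by
  have hf := h.radialMean_neg ha hμ hr
  have hslope : S r - a * radialMean a S r < 0 := h.profileSlope_neg ha hμ hr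
  have hS := h.add_one_mul_le_apply ha hlam hμ hr
  have hf_le : -radialMean a S r ≤ -((a + 1) * μ) / a := by
    rw [le_div_iff₀ ha]
    linarith
  calc ‖reducedState a S r‖ ≤ -S r + -radialMean a S r + profile a S r := by
        simpa only [abs_of_neg (h.apply_neg ha hμ hr), abs_of_neg hf,
          abs_of_pos (h.profile_pos hr)] using norm_reducedState_le a S r
    _ ≤ _ := by
        gcongr
        exact add_le_of_nonpos_right (mul_nonpos_of_nonneg_of_nonpos hr.1 hf.le)

end IsReducedSol

lemma isReducedSol_zero {a lam R : ℝ} : IsReducedSol a lam 0 R 0 := by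
  have hprofile (r : ℝ) : profile a 0 r = 1 := by simp [profile, radialMean]
  refine ⟨continuous_const, by simp, fun r _ => hprofile r ▸ one_pos, fun r _ => ?_⟩
  simp [reducedField, reducedState, radialMean]

theorem exists_isReducedSol {a lam R : ℝ} (ha : 0 < a) (hlam : 0 ≤ lam) (μ : ℝ) (hR : 0 < R) :
    ∃ S, IsReducedSol a lam μ R S := by
  rcases lt_trichotomy μ 0 with hμ | rfl | hμ
  · exact exists_isReducedSol_of_bounds ha.le hR.le (Real.exp_pos _) fun ρ hρ S hS r hr =>
      ⟨(hS.norm_reducedState_le_of_neg ha hlam hμ hr).trans_lt (lt_add_one _),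
        hS.exp_lt_profile ha hlam hμ hR hρ.2 hr⟩
  · exact ⟨0, isReducedSol_zero⟩
  · let A := ((a + 1) * μ + (a + 1) * μ / a + 1) * Real.exp ((a + 1) * μ * R)
    refine exists_isReducedSol_of_bounds (A := A + 1) ha.le hR.le one_half_pos
      fun ρ hρ S hS r hr => ?_
    refine ⟨((hS.norm_reducedState_le_of_pos ha hlam hμ hr).trans ?_).trans_lt (lt_add_one A),
      one_half_lt_one.trans_le (hS.one_le_profile ha hμ hr)⟩
    dsimp only [A]
    gcongr
    exact hr.2.trans hρ.2

theorem exists_forall_isReducedSol {a lam : ℝ} (ha : 0 < a) (hlam : 0 ≤ lam) (μ : ℝ) :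
    ∃ S, ∀ R, IsReducedSol a lam μ R S := by
  choose u hu using fun n : ℕ => exists_isReducedSol ha hlam μ (Nat.cast_add_one_pos (α := ℝ) n)
  have hu' {m n : ℕ} (hmn : m ≤ n) : IsReducedSol a lam μ m (u n) :=
    (hu n).mono ((Nat.cast_le.2 hmn).trans (lt_add_one _).le)
  obtain ⟨S, hS, hSu⟩ := exists_continuous_eqOn_Icc (fun n => (hu n).continuous)
    fun m n hmn => (hu' le_rfl).eqOn ha.le (hu' hmn)
  refine ⟨S, fun R => ?_⟩
  obtain ⟨n, hn⟩ := exists_nat_gt R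
  exact (hu' le_rfl).congr n.cast_nonneg hS (hSu n).symm hn

/-! ### Equivalence with the initial value problem -/

/-- The initial value problem `IsSol` with a real coefficient `b` in place of `n - 1`. -/
def IsRealSol (b lam μ : ℝ) (h : ℝ → ℝ) : Prop :=
  ContDiffOn ℝ 2 h (Ioi 0) ∧ ContDiffOn ℝ 1 h (Ici 0) ∧
  (∀ r : ℝ, 0 < r →
    2 * r ^ 2 * h r * deriv (deriv h) r =
      b * h r * (h r - 1) + r * deriv h r * (r * deriv h r - lam * r - b) ∧ 0 < h r) ∧
  h 0 = 1 ∧ derivWithin h (Ici 0) 0 = μ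

lemma ode_iff_reduced {a lam r h f P Q : ℝ} (hr : r ≠ 0) (hh : h = 1 + r * f) (hne : h ≠ 0) :
    2 * r ^ 2 * h * Q = 2 * a * h * (h - 1) + r * P * (r * P - lam * r - 2 * a) ↔
      Q = P * (P + 2 * a * f - lam) / (2 * h) - a * (P - f) / r := by
  have hfactor : 2 * r ^ 2 * h * Q - (2 * a * h * (h - 1) + r * P * (r * P - lam * r - 2 * a)) =
      2 * r ^ 2 * h * (Q - (P * (P + 2 * a * f - lam) / (2 * h) - a * (P - f) / r)) := by
    field_simp
    rw [hh]
    ring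
  have hcoeff : 2 * r ^ 2 * h ≠ 0 := by positivity
  rw [← sub_eq_zero, hfactor, mul_eq_zero_iff_left hcoeff, sub_eq_zero]

lemma contDiffOn_two_of_hasDerivAt {h p q : ℝ → ℝ} {s : Set ℝ} (hs : IsOpen s)
    (hh : ∀ r ∈ s, HasDerivAt h (p r) r) (hp : ∀ r ∈ s, HasDerivAt p (q r) r)
    (hq : ContinuousOn q s) : ContDiffOn ℝ 2 h s := by
  have hp1 : ContDiffOn ℝ 1 p s := (contDiffOn_one_iff_derivWithin hs.uniqueDiffOn).2
    ⟨fun r hr => (hp r hr).differentiableAt.differentiableWithinAt,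
      hq.congr fun r hr => (hp r hr).hasDerivWithinAt.derivWithin (hs.uniqueDiffWithinAt hr)⟩
  rw [show (2 : WithTop ℕ∞) = 1 + 1 from rfl, contDiffOn_succ_iff_deriv_of_isOpen hs]
  exact ⟨fun r hr => (hh r hr).differentiableAt.differentiableWithinAt, by simp,
    hp1.congr fun r hr => (hh r hr).deriv⟩

theorem isRealSol_profile {a lam μ : ℝ} {S : ℝ → ℝ} (ha : 0 ≤ a)
    (hS : ∀ R, IsReducedSol a lam μ R S) : IsRealSol (2 * a) lam μ (profile a S) := by
  have hcont : Continuous S := (hS 0).continuous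
  have hmean := continuous_radialMean ha hcont
  have hprofile := continuous_profile ha hcont
  have hslope := continuous_profileSlope ha hcont
  have hpos {r : ℝ} (hr : 0 < r) : 0 < profile a S r := (hS r).profile_pos ⟨hr.le, le_rfl⟩
  have hderiv {r : ℝ} (hr : 0 ≤ r) := hasDerivAt_profile ha hcont hr
  have hderiv2 {r : ℝ} (hr : 0 < r) := (hS r).hasDerivAt_profileSlope ha ⟨hr, le_rfl⟩
  have hderivWithin : ∀ r ∈ Ici (0 : ℝ), derivWithin (profile a S) (Ici 0) r = profileSlope a S r :=
    fun r hr => (hderiv hr).hasDerivWithinAt.derivWithin (uniqueDiffOn_Ici 0 r hr)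
  refine ⟨?_, ?_, fun r hr => ⟨?_, hpos hr⟩, profile_apply_zero, ?_⟩
  · refine contDiffOn_two_of_hasDerivAt isOpen_Ioi (fun r hr => hderiv (le_of_lt hr))
      (fun r hr => hderiv2 hr) (ContinuousOn.sub ?_ ?_)
    · exact ContinuousOn.div (by fun_prop) (by fun_prop)
        fun r hr => mul_ne_zero two_ne_zero (hpos hr).ne'
    · exact ContinuousOn.div (by fun_prop) (by fun_prop) fun r hr => ne_of_gt hr
  · rw [contDiffOn_one_iff_derivWithin (uniqueDiffOn_Ici 0)]
    exact ⟨fun r hr => (hderiv hr).differentiableAt.differentiableWithinAt,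
      hslope.continuousOn.congr hderivWithin⟩
  · have hderiv_eq : deriv (profile a S) =ᶠ[𝓝 r] profileSlope a S := by
      filter_upwards [Ioi_mem_nhds hr] with x hx using (hderiv (le_of_lt hx)).deriv
    rw [hderiv_eq.deriv_eq, hderiv_eq.eq_of_nhds, (hderiv2 hr).deriv]
    exact (ode_iff_reduced hr.ne' rfl (hpos hr).ne').2 rfl
  · rw [hderivWithin 0 self_mem_Ici, (hS 0).profileSlope_zero_eq ha]

namespace IsRealSol

variable {a b lam μ : ℝ} {g : ℝ → ℝ}

lemma exists_continuous_hasDerivAt (hg : IsRealSol b lam μ g) :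
    ∃ P : ℝ → ℝ, Continuous P ∧ P 0 = μ ∧ (∀ r, 0 < r → HasDerivAt g (P r) r) ∧
      ∀ r, 0 < r → HasDerivAt P (deriv (deriv g) r) r := by
  obtain ⟨hg2, hg1, -, -, hμ⟩ := hg
  let P (r : ℝ) : ℝ := derivWithin g (Ici 0) |r|
  have hP {r : ℝ} (hr : 0 < r) : P r = deriv g r := by
    simp only [P, abs_of_pos hr, derivWithin_of_mem_nhds (Ici_mem_nhds hr)]
  have hg2' := (contDiffOn_succ_iff_deriv_of_isOpen (n := 1) isOpen_Ioi).1 hg2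
  refine ⟨P, ?_, by simp only [P, abs_zero, hμ], fun r hr => ?_, fun r hr => ?_⟩
  · exact ((contDiffOn_one_iff_derivWithin (uniqueDiffOn_Ici 0)).1 hg1).2.comp_continuous
      continuous_abs abs_nonneg
  · rw [hP hr]
    exact (hg2'.1.differentiableAt (Ioi_mem_nhds hr)).hasDerivAt
  · refine ((hg2'.2.2.differentiableOn one_ne_zero).differentiableAt
      (Ioi_mem_nhds hr)).hasDerivAt.congr_of_eventuallyEq ?_
    filter_upwards [Ioi_mem_nhds hr] with x hx using hP hx

theorem exists_isReducedSol (hg : IsRealSol (2 * a) lam μ g) (ha : 0 ≤ a) :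
    ∃ S, (∀ R, IsReducedSol a lam μ R S) ∧ EqOn g (profile a S) (Ici 0) := by
  obtain ⟨P, hP, hP0, hgP, hP'⟩ := hg.exists_continuous_hasDerivAt
  obtain ⟨-, hg1, hode, hg0, -⟩ := hg
  let S (r : ℝ) : ℝ := P r + a * radialMean 0 P r
  have hmean {r : ℝ} (hr : 0 ≤ r) : radialMean a S r = radialMean 0 P r := by
    simpa only [sub_zero] using radialMean_add_mul_radialMean (c := 0) ha le_rfl hP hr
  have hg_eq {r : ℝ} (hr : 0 ≤ r) : g r = 1 + r * radialMean 0 P r :=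
    hg0 ▸ eq_add_mul_radialMean_zero_of_hasDerivAt hP hg1.continuousOn hgP hr
  have hprofile {r : ℝ} (hr : 0 ≤ r) : profile a S r = g r := by rw [profile, hmean hr, hg_eq hr]
  have hslope {r : ℝ} (hr : 0 ≤ r) : profileSlope a S r = P r := by
    rw [profileSlope, hmean hr, add_sub_cancel_right]
  refine ⟨S, fun R => ⟨hP.add (continuous_const.mul (continuous_radialMean le_rfl hP)), ?_,
    fun r hr => hprofile hr.1.le ▸ (hode r hr.1).2, fun r hr => ?_⟩,
    fun r hr => (hprofile hr).symm⟩
  · simp only [S, radialMean_apply_zero le_rfl, hP0]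
    ring
  · obtain ⟨hode_r, hpos⟩ := hode r hr.1
    rw [(hgP r hr.1).deriv, ode_iff_reduced hr.1.ne' (hg_eq hr.1.le) hpos.ne'] at hode_r
    refine ((hP' r hr.1).add
      ((hasDerivAt_radialMean le_rfl hP hr.1).const_mul a)).congr_deriv ?_
    rw [reducedField_reducedState, hslope hr.1.le, hmean hr.1.le, hprofile hr.1.le, hode_r]
    ring

end IsRealSol

theorem existence_uniqueness_general (lam μ₁ b : ℝ) (hlam : 0 ≤ lam) (hb : 0 < b) :
    ∃ h : ℝ → ℝ, IsRealSol b lam μ₁ h ∧ ∀ g : ℝ → ℝ, IsRealSol b lam μ₁ g → EqOn g h (Ici 0) := by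
  obtain ⟨a, rfl⟩ : ∃ a, b = 2 * a := ⟨b / 2, by ring⟩
  have ha : 0 < a := by linarith
  obtain ⟨S, hS⟩ := exists_forall_isReducedSol ha hlam μ₁
  refine ⟨profile a S, isRealSol_profile ha.le hS, fun g hg r hr => ?_⟩
  obtain ⟨T, hT, hgT⟩ := hg.exists_isReducedSol ha.le
  have hTS : EqOn T S (Icc 0 r) := (hT r).eqOn ha.le (hS r)
  rw [hgT hr, profile, profile, radialMean_congr hr hTS]

theorem existence_uniqueness (lam μ₁ : ℝ) (n : ℕ) (hlam : 0 ≤ lam)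
    (hn2 : 2 ≤ n) (hn4 : n ≤ 4) :
    ∃ h : ℝ → ℝ, IsSol n lam μ₁ h ∧
      ∀ g : ℝ → ℝ, IsSol n lam μ₁ g → Set.EqOn g h (Set.Ici 0) :=
  existence_uniqueness_general lam μ₁ (n - 1) hlam (sub_pos.2 (Nat.one_lt_cast.2 hn2))
end

section
/- Let λ ≥ 0, μ₁ ∈ ℝ, n ≥ 2 an integer, and let h ∈ C²((0,∞)) ∩ C¹([0,∞)) be a solution of 2r²h(r)h''(r) = (n-1)h(r)(h(r)-1) + r h'(r)(r h'(r) - λr - (n-1)), h(r) > 0 for r > 0, with h(0) = 1, h'(0) = μ₁. Then: if μ₁ > 0, then h(r) > 1 and h'(r) > 0 for all r > 0; if μ₁ < 0, then 0 < h(r) < 1 and h'(r) < 0 for all r > 0. -/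
open Set Filter Topology

/-!
Compare `h` with its initial value `1` and look at the first critical point of `h`. If `μ₁ > 0` then
`h' > 0` near `0`; were `h'` to vanish, then at its first zero `b` we would have `h b > 1`, and the
equation, whose terms containing `h'` drop out there, would give `h'' b > 0`. But `h'` is positive
before `b` and vanishes at `b`, so `h'' b ≤ 0`, a contradiction. The case `μ₁ < 0` is the same
argument applied to `-h`.
-/

section FirstHitting

variable {α β : Type*} [ConditionallyCompleteLinearOrder α] [TopologicalSpace α] [OrderTopology α]
  [DenselyOrdered α] [LinearOrder β] [TopologicalSpace β] [OrderClosedTopology β]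

lemma exists_eq_and_forall_Ioo_lt {f : α → β} {a x : α} {c : β} (hf : ContinuousOn f (Ioi a))
    (hnear : ∀ᶠ y in 𝓝[>] a, c < f y) (hax : a < x) (hfx : f x ≤ c) :
    ∃ b, a < b ∧ f b = c ∧ ∀ y ∈ Ioo a b, c < f y := by
  obtain ⟨e, ⟨hae, hex⟩, hlt_e⟩ := (mem_nhdsGT_iff_exists_mem_Ioc_Ioo_subset hax).1 hnear
  have hclosed : IsClosed (Icc e x ∩ f ⁻¹' Iic c) :=
    (hf.mono fun y hy ↦ hae.trans_le hy.1).preimage_isClosed_of_isClosed isClosed_Icc isClosed_Iic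
  obtain ⟨b, ⟨⟨heb, hbx⟩, hfb⟩, hleast⟩ :=
    (isCompact_Icc.of_isClosed_subset hclosed inter_subset_left).exists_isLeast
      ⟨x, ⟨hex, le_rfl⟩, hfx⟩
  have hab : a < b := hae.trans_le heb
  have hlt_b : ∀ y ∈ Ioo a b, c < f y := by
    intro y hy
    rcases lt_or_ge y e with hye | hey
    · exact hlt_e ⟨hy.1, hye⟩
    · by_contra! hfy
      exact hy.2.not_ge (hleast ⟨⟨hey, hy.2.le.trans hbx⟩, hfy⟩)
  have : (𝓝[<] b).NeBot := nhdsLT_neBot_of_exists_lt ⟨a, hab⟩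
  have hge : c ≤ f b := ge_of_tendsto
    ((hf.continuousAt (Ioi_mem_nhds hab)).mono_left nhdsWithin_le_nhds)
    (mem_of_superset (Ioo_mem_nhdsLT hab) fun y hy ↦ (hlt_b y hy).le)
  exact ⟨b, hab, le_antisymm hfb hge, hlt_b⟩

end FirstHitting

section CriticalPoints

variable {f g : ℝ → ℝ} {a b : ℝ}

lemma deriv_nonpos_of_frequently_pos_left (hfb : f b = 0) (hf : ∃ᶠ x in 𝓝[<] b, 0 < f x) :
    deriv f b ≤ 0 := by
  by_contra! hderiv
  have hsign : ∀ᶠ x in 𝓝[<] b, SignType.sign (f x) = SignType.sign (x - b) :=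
    (eventually_nhdsWithin_sign_eq_of_deriv_pos hderiv hfb).filter_mono nhdsWithin_le_nhds
  obtain ⟨x, hfx, hx_sign, hxb⟩ :=
    (hf.and_eventually (hsign.and eventually_mem_nhdsWithin)).exists
  rw [sign_pos hfx, sign_neg (sub_neg.2 hxb)] at hx_sign
  exact absurd hx_sign (by decide)

lemma lt_of_forall_Ioo_deriv_pos (hab : a < b) (hg : ContinuousOn g (Icc a b))
    (hderiv : ∀ x ∈ Ioo a b, 0 < deriv g x) : g a < g b :=
  strictMonoOn_of_deriv_pos (convex_Icc a b) hg (by rwa [interior_Icc])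
    (left_mem_Icc.2 hab.le) (right_mem_Icc.2 hab.le) hab

lemma lt_and_deriv_pos_of_deriv_deriv_pos_of_deriv_eq_zero (hg : ContinuousOn g (Ici a))
    (hg' : ContinuousOn (deriv g) (Ioi a)) (hnear : ∀ᶠ x in 𝓝[>] a, 0 < deriv g x)
    (hcrit : ∀ x, a < x → deriv g x = 0 → g a < g x → 0 < deriv (deriv g) x) {x : ℝ}
    (hx : a < x) : g a < g x ∧ 0 < deriv g x := by
  have hlt : ∀ b, a < b → (∀ y ∈ Ioo a b, 0 < deriv g y) → g a < g b := fun b hab ↦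
    lt_of_forall_Ioo_deriv_pos hab (hg.mono Icc_subset_Ici_self)
  have hpos : ∀ y, a < y → 0 < deriv g y := by
    by_contra! ⟨y, hy, hderiv_y⟩
    obtain ⟨b, hab, hb, hpos_b⟩ := exists_eq_and_forall_Ioo_lt hg' hnear hy hderiv_y
    have hpos_left : ∀ᶠ z in 𝓝[<] b, 0 < deriv g z :=
      mem_of_superset (Ioo_mem_nhdsLT hab) hpos_b
    exact (hcrit b hab hb (hlt b hab hpos_b)).not_ge
      (deriv_nonpos_of_frequently_pos_left hb hpos_left.frequently)
  exact ⟨hlt x hx fun y hy ↦ hpos y hy.1, hpos x hx⟩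

lemma lt_and_deriv_neg_of_deriv_deriv_neg_of_deriv_eq_zero (hg : ContinuousOn g (Ici a))
    (hg' : ContinuousOn (deriv g) (Ioi a)) (hnear : ∀ᶠ x in 𝓝[>] a, deriv g x < 0)
    (hcrit : ∀ x, a < x → deriv g x = 0 → g x < g a → deriv (deriv g) x < 0) {x : ℝ}
    (hx : a < x) : g x < g a ∧ deriv g x < 0 := by
  have hderiv : deriv (-g) = -deriv g := deriv.neg'
  have hderiv₂ : deriv (-deriv g) = -deriv (deriv g) := deriv.neg'
  simpa [hderiv] using lt_and_deriv_pos_of_deriv_deriv_pos_of_deriv_eq_zero (g := -g) hg.neg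
    (by simpa only [hderiv] using hg'.neg) (by simpa [hderiv] using hnear)
    (by simpa [hderiv, hderiv₂] using hcrit) hx

end CriticalPoints

namespace IsSol

variable {n : ℕ} {lam μ₁ : ℝ} {h : ℝ → ℝ}

lemma pos (hsol : IsSol n lam μ₁ h) {r : ℝ} (hr : 0 < r) : 0 < h r :=
  (hsol.2.2.1 r hr).2

lemma apply_zero (hsol : IsSol n lam μ₁ h) : h 0 = 1 :=
  hsol.2.2.2.1

lemma continuousOn (hsol : IsSol n lam μ₁ h) : ContinuousOn h (Ici 0) :=
  hsol.2.1.continuousOn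

lemma continuousOn_deriv (hsol : IsSol n lam μ₁ h) : ContinuousOn (deriv h) (Ioi 0) :=
  hsol.1.continuousOn_deriv_of_isOpen isOpen_Ioi one_le_two

lemma tendsto_deriv (hsol : IsSol n lam μ₁ h) : Tendsto (deriv h) (𝓝[>] 0) (𝓝 μ₁) := by
  obtain ⟨-, hC1, -, -, hμ⟩ := hsol
  have hwithin : Tendsto (derivWithin h (Ici 0)) (𝓝[>] 0) (𝓝 μ₁) :=
    hμ ▸ (hC1.continuousOn_derivWithin (uniqueDiffOn_Ici 0) le_rfl 0 self_mem_Ici).mono_left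
      (nhdsWithin_mono _ Ioi_subset_Ici_self)
  exact hwithin.congr' <| eventually_mem_nhdsWithin.mono fun _ hr ↦
    derivWithin_of_mem_nhds (Ici_mem_nhds hr)

lemma deriv_deriv_of_deriv_eq_zero (hsol : IsSol n lam μ₁ h) {r : ℝ} (hr : 0 < r)
    (hcrit : deriv h r = 0) :
    deriv (deriv h) r = ((n : ℝ) - 1) / (2 * r ^ 2) * (h r - 1) := by
  have hne : h r ≠ 0 := (hsol.pos hr).ne'
  have hode := (hsol.2.2.1 r hr).1
  rw [hcrit] at hode
  field_simp
  apply mul_left_cancel₀ hne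
  linear_combination hode

end IsSol

theorem sign_of_solution_general (lam μ₁ : ℝ) (n : ℕ) (hn2 : 2 ≤ n)
    (h : ℝ → ℝ) (hsol : IsSol n lam μ₁ h) :
    (0 < μ₁ → ∀ r : ℝ, 0 < r → 1 < h r ∧ 0 < deriv h r) ∧
    (μ₁ < 0 → ∀ r : ℝ, 0 < r → 0 < h r ∧ h r < 1 ∧ deriv h r < 0) := by
  have hn : (0 : ℝ) < n - 1 := sub_pos.2 (by exact_mod_cast hn2)
  have hcoeff : ∀ r : ℝ, 0 < r → 0 < ((n : ℝ) - 1) / (2 * r ^ 2) := fun r hr ↦ by positivity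
  rw [← hsol.apply_zero]
  refine ⟨fun hμ r hr ↦ ?_, fun hμ r hr ↦ ⟨hsol.pos hr, ?_⟩⟩
  · refine lt_and_deriv_pos_of_deriv_deriv_pos_of_deriv_eq_zero hsol.continuousOn
      hsol.continuousOn_deriv (hsol.tendsto_deriv.eventually_const_lt hμ) (fun s hs hs' hlt ↦ ?_) hr
    rw [hsol.apply_zero] at hlt
    rw [hsol.deriv_deriv_of_deriv_eq_zero hs hs']
    exact mul_pos (hcoeff s hs) (sub_pos.2 hlt)
  · refine lt_and_deriv_neg_of_deriv_deriv_neg_of_deriv_eq_zero hsol.continuousOn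
      hsol.continuousOn_deriv (hsol.tendsto_deriv.eventually_lt_const hμ) (fun s hs hs' hlt ↦ ?_) hr
    rw [hsol.apply_zero] at hlt
    rw [hsol.deriv_deriv_of_deriv_eq_zero hs hs']
    exact mul_neg_of_pos_of_neg (hcoeff s hs) (sub_neg.2 hlt)

theorem sign_of_solution (lam μ₁ : ℝ) (n : ℕ) (hlam : 0 ≤ lam) (hn2 : 2 ≤ n)
    (h : ℝ → ℝ) (hsol : IsSol n lam μ₁ h) :
    (0 < μ₁ → ∀ r : ℝ, 0 < r → 1 < h r ∧ 0 < deriv h r) ∧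
    (μ₁ < 0 → ∀ r : ℝ, 0 < r → 0 < h r ∧ h r < 1 ∧ deriv h r < 0) := by
  exact sign_of_solution_general lam μ₁ n hn2 h hsol
end
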